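/- Let k be a field, let F = F(k, X) be the free metabelian Lie algebra on a type X over k, and let (b_β)_{β ∈ B} be a family of elements of F whose images in the quotient vector space F/⁅F, F⁆ are linearly independent over k. Then the Lie algebra homomorphism φ : F(k, B) → F determined by φ(a_β) = b_β is injective; consequently the subalgebra of F generated by the b_β is a free metabelian Lie algebra of rank |B|. -/

import Mathlib

/-- The free metabelian Lie algebra on `X` over `k`: the quotient of the free Lie algebra
on `X` by its second derived ideal `⁅⁅L,L⁆,⁅L,L⁆⁆`. -/
abbrev FreeMetabelianLie (k : Type*) (X : Type*) [CommRing k] :=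
  FreeLieAlgebra k X ⧸ LieAlgebra.derivedSeries k (FreeLieAlgebra k X) 2

/-- The image in the free metabelian Lie algebra of the generator `x`. -/
noncomputable def fmGen (k : Type*) {X : Type*} [CommRing k] (x : X) :
    FreeMetabelianLie k X :=
  LieSubmodule.Quotient.mk' _ (FreeLieAlgebra.of k x)

/-!
Linear independence splits: there is a linear retraction `g` of `F/⁅F, F⁆` onto the free module on
`B` carrying the class of `b β` to the basis vector at `β`. Lifting `g` through the generators gives
a homomorphism `ρ` back to the free algebra on `B` for which `ρ ∘ φ` is the identity modulo the
derived ideal. Such an endomorphism `θ` acts trivially on every quotient of consecutive terms of the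
lower central series, so its kernel lies in every term. The free algebra is residually nilpotent: it
is graded, the grading being encoded by the homomorphism `a_x ↦ X ⊗ a_x` into the extension of
scalars to `k[X]`, whose values on the `n`-th term of the lower central series are divisible by
`X ^ n`. Hence `θ`, and with it `φ`, is injective. None of this is special to derived length two.
-/

open LieAlgebra LieModule Polynomial
open scoped TensorProduct

section LowerCentralSeries

variable {R L : Type*} [CommRing R] [LieRing L] [LieAlgebra R L]

theorem lie_mem_derivedSeries_one (x y : L) : ⁅x, y⁆ ∈ derivedSeries R L 1 :=
  LieSubmodule.lie_mem_lie (LieSubmodule.mem_top x) (LieSubmodule.mem_top y)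

section Module

variable {M : Type*} [AddCommGroup M] [Module R M] [LieRingModule L M]

theorem lie_toSubmodule_le_iff [LieModule R L M] {I : LieIdeal R L} {N : LieSubmodule R L M}
    {S : Submodule R M} : ⁅I, N⁆.toSubmodule ≤ S ↔ ∀ x ∈ I, ∀ m ∈ N, ⁅x, m⁆ ∈ S := by
  rw [LieSubmodule.lieIdeal_oper_eq_linear_span', Submodule.span_le]
  exact ⟨fun h x hx m hm => h ⟨x, hx, m, hm, rfl⟩,
    fun h _ ⟨x, hx, m, hm, hxm⟩ => hxm ▸ h x hx m hm⟩

theorem lie_mem_lowerCentralSeries_succ {n : ℕ} (x : L) {m : M}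
    (hm : m ∈ lowerCentralSeries R L M n) : ⁅x, m⁆ ∈ lowerCentralSeries R L M (n + 1) := by
  rw [lowerCentralSeries_succ]
  exact LieSubmodule.lie_mem_lie (LieSubmodule.mem_top x) hm

theorem lie_mem_lowerCentralSeries_add_two [LieModule R L M] {n : ℕ} {x : L} {m : M}
    (hx : x ∈ derivedSeries R L 1) (hm : m ∈ lowerCentralSeries R L M n) :
    ⁅x, m⁆ ∈ lowerCentralSeries R L M (n + 2) := by
  let S := (lowerCentralSeries R L M (n + 2)).toSubmodule.comap
    ((toModuleHom R L M : L ⊗[R] M →ₗ[R] M) ∘ₗ (TensorProduct.mk R L M).flip m)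
  refine (lie_toSubmodule_le_iff (S := S)).mpr (fun y _ z _ => ?_) hx
  change ⁅⁅y, z⁆, m⁆ ∈ lowerCentralSeries R L M (n + 2)
  rw [lie_lie]
  exact sub_mem
    (lie_mem_lowerCentralSeries_succ y (lie_mem_lowerCentralSeries_succ z hm))
    (lie_mem_lowerCentralSeries_succ z (lie_mem_lowerCentralSeries_succ y hm))

end Module

theorem map_sub_self_mem_lowerCentralSeries_succ {θ : L →ₗ⁅R⁆ L}
    (hθ : ∀ u, θ u - u ∈ derivedSeries R L 1) {n : ℕ} {u : L}
    (hu : u ∈ lowerCentralSeries R L L n) : θ u - u ∈ lowerCentralSeries R L L (n + 1) := by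
  induction n generalizing u with
  | zero => exact hθ u
  | succ n ih =>
    rw [lowerCentralSeries_succ] at hu
    let S := (lowerCentralSeries R L L (n + 2)).toSubmodule.comap ((θ : L →ₗ[R] L) - LinearMap.id)
    refine (lie_toSubmodule_le_iff (S := S)).mpr (fun x _ v hv => ?_) hu
    have hθv : θ v ∈ lowerCentralSeries R L L n := by
      simpa using add_mem (antitone_lowerCentralSeries R L L n.le_succ (ih hv)) hv
    have map_lie_sub : θ ⁅x, v⁆ - ⁅x, v⁆ = ⁅θ x - x, θ v⁆ + ⁅x, θ v - v⁆ := by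
      rw [LieHom.map_lie, sub_lie, lie_sub]
      abel
    change θ ⁅x, v⁆ - ⁅x, v⁆ ∈ lowerCentralSeries R L L (n + 2)
    rw [map_lie_sub]
    exact add_mem (lie_mem_lowerCentralSeries_add_two (hθ x) hθv)
      (lie_mem_lowerCentralSeries_succ x (ih hv))

theorem injective_of_map_sub_self_mem_derivedSeries_one
    (hL : ⨅ n, lowerCentralSeries R L L n = ⊥) {θ : L →ₗ⁅R⁆ L}
    (hθ : ∀ u, θ u - u ∈ derivedSeries R L 1) : Function.Injective θ := by
  rw [injective_iff_map_eq_zero]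
  intro w hw
  rw [← LieSubmodule.mem_bot (R := R) (L := L), ← hL, LieSubmodule.mem_iInf]
  intro n
  induction n with
  | zero => exact LieSubmodule.mem_top w
  | succ n ih => simpa [hw] using map_sub_self_mem_lowerCentralSeries_succ hθ ih

end LowerCentralSeries

section AdicFiltration

variable {R A L M : Type*} [CommRing R] [LieRing L] [LieAlgebra R L] [CommRing A]
  [LieRing M] [LieAlgebra A M]

theorem lie_mem_ideal_mul_smul_top {I J : Ideal A} {x y : M} (hx : x ∈ I • (⊤ : Submodule A M))
    (hy : y ∈ J • (⊤ : Submodule A M)) : ⁅x, y⁆ ∈ (I * J) • (⊤ : Submodule A M) := by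
  induction hx using Submodule.smul_induction_on' with
  | add x₁ _ x₂ _ h₁ h₂ => simpa only [add_lie] using add_mem h₁ h₂
  | smul a ha x _ =>
    induction hy using Submodule.smul_induction_on' with
    | add y₁ _ y₂ _ h₁ h₂ => simpa only [lie_add] using add_mem h₁ h₂
    | smul b hb y _ =>
      rw [smul_lie, lie_smul, smul_smul]
      exact Submodule.smul_mem_smul (Ideal.mul_mem_mul ha hb) Submodule.mem_top

variable [Algebra R A] [LieAlgebra R M] [IsScalarTower R A M] {I : Ideal A} {δ : L →ₗ⁅R⁆ M}

theorem map_mem_pow_smul_top_of_mem_lowerCentralSeries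
    (hδ : ∀ u, δ u ∈ I • (⊤ : Submodule A M)) {n : ℕ} {u : L}
    (hu : u ∈ lowerCentralSeries R L L n) : δ u ∈ I ^ n • (⊤ : Submodule A M) := by
  induction n generalizing u with
  | zero => simp
  | succ n ih =>
    rw [lowerCentralSeries_succ] at hu
    let S := ((I ^ (n + 1) • (⊤ : Submodule A M)).restrictScalars R).comap (δ : L →ₗ[R] M)
    refine (lie_toSubmodule_le_iff (S := S)).mpr (fun x _ v hv => ?_) hu
    change δ ⁅x, v⁆ ∈ I ^ (n + 1) • (⊤ : Submodule A M)
    rw [LieHom.map_lie, pow_succ']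
    exact lie_mem_ideal_mul_smul_top (hδ x) (ih hv)

theorem iInf_lowerCentralSeries_eq_bot_of_injective [IsHausdorff I M]
    (hinj : Function.Injective δ) (hδ : ∀ u, δ u ∈ I • (⊤ : Submodule A M)) :
    ⨅ n, lowerCentralSeries R L L n = ⊥ := by
  rw [LieSubmodule.eq_bot_iff]
  intro u hu
  rw [LieSubmodule.mem_iInf] at hu
  refine hinj ((IsHausdorff.haus ‹_› _ fun n => ?_ : δ u = 0).trans δ.map_zero.symm)
  rw [SModEq.zero]
  exact map_mem_pow_smul_top_of_mem_lowerCentralSeries hδ (hu n)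

end AdicFiltration

theorem isHausdorff_span_X_tensorProduct (R M : Type*) [CommRing R] [AddCommGroup M] [Module R M] :
    IsHausdorff (Ideal.span {(X : R[X])}) (R[X] ⊗[R] M) := by
  let coeffs := TensorProduct.equivFinsuppOfBasisLeft (N := M) (basisMonomials R)
  have coeffs_X_pow_smul (n : ℕ) (y : R[X] ⊗[R] M) : coeffs ((X ^ (n + 1) : R[X]) • y) n = 0 := by
    induction y with
    | zero => simp
    | add y z hy hz => rw [smul_add, map_add, Finsupp.add_apply, hy, hz, add_zero]
    | tmul p m =>
      have coeff_eq_zero : (basisMonomials R).repr (X ^ (n + 1) * p) n = 0 := by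
        change (X ^ (n + 1) * p).coeff n = 0
        rw [coeff_X_pow_mul', if_neg n.not_succ_le_self]
      simp [coeffs, TensorProduct.smul_tmul', coeff_eq_zero]
  refine ⟨fun z hz => coeffs.map_eq_zero_iff.mp (Finsupp.ext fun n => ?_)⟩
  have hn := hz (n + 1)
  rw [SModEq.zero, Ideal.span_singleton_pow, Submodule.ideal_span_singleton_smul,
    Submodule.mem_smul_pointwise_iff_exists] at hn
  obtain ⟨y, -, rfl⟩ := hn
  exact coeffs_X_pow_smul n y

section DerivedSeries

variable {R L L' : Type*} [CommRing R] [LieRing L] [LieAlgebra R L] [LieRing L'] [LieAlgebra R L']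

theorem derivedSeries_le_ker {n : ℕ} (h : derivedSeries R L' n = ⊥) (f : L →ₗ⁅R⁆ L') :
    derivedSeries R L n ≤ f.ker := by
  rw [← LieIdeal.map_eq_bot_iff, eq_bot_iff, ← h]
  exact LieIdeal.derivedSeries_map_le n

theorem derivedSeries_tensorProduct_eq_bot (A : Type*) [CommRing A] [Algebra R A] {n : ℕ}
    (h : derivedSeries R L n = ⊥) : derivedSeries R (A ⊗[R] L) n = ⊥ := by
  have hA : derivedSeries A (A ⊗[R] L) n = ⊥ := by
    rw [derivedSeries_baseChange, h, LieSubmodule.baseChange_bot]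
  apply SetLike.coe_injective
  rw [LieIdeal.coe_derivedSeries_eq_int, ← LieIdeal.coe_derivedSeries_eq_int (R := A), hA]
  rfl

/-- The projection of a Lie algebra onto the quotient by an ideal, as a homomorphism of Lie
algebras; `LieSubmodule.Quotient.mk'` is only a homomorphism of Lie modules. -/
def lieQuotientMk (I : LieIdeal R L) : L →ₗ⁅R⁆ L ⧸ I :=
  { (LieSubmodule.Quotient.mk' I : L →ₗ[R] L ⧸ I) with
    map_lie' := LieSubmodule.Quotient.mk_bracket I _ _ }

theorem lieQuotientMk_surjective (I : LieIdeal R L) : Function.Surjective (lieQuotientMk I) :=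
  LieSubmodule.Quotient.surjective_mk' I

theorem derivedSeries_quotient_derivedSeries (n : ℕ) :
    derivedSeries R (L ⧸ derivedSeries R L n) n = ⊥ := by
  rw [← LieIdeal.derivedSeries_map_eq n (lieQuotientMk_surjective _), LieIdeal.map_eq_bot_iff]
  exact fun u hu => LieHom.mem_ker.mpr ((LieSubmodule.Quotient.mk_eq_zero _).mpr hu)

/-- The homomorphism of Lie algebras induced on the quotient by an ideal on which `f` vanishes. -/
def lieQuotientLift (I : LieIdeal R L) (f : L →ₗ⁅R⁆ L') (h : I ≤ f.ker) : L ⧸ I →ₗ⁅R⁆ L' :=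
  { I.toSubmodule.liftQ (f : L →ₗ[R] L') h with
    map_lie' {x y} := by
      obtain ⟨x, rfl⟩ := lieQuotientMk_surjective I x
      obtain ⟨y, rfl⟩ := lieQuotientMk_surjective I y
      exact f.map_lie x y }

end DerivedSeries

/-- The free solvable Lie algebra on `X` of derived length at most `n`; for `n = 2` this is the
free metabelian Lie algebra. -/
abbrev FreeSolvableLie (k X : Type*) [CommRing k] (n : ℕ) :=
  FreeLieAlgebra k X ⧸ derivedSeries k (FreeLieAlgebra k X) n

namespace FreeSolvableLie

variable {k X M : Type*} [CommRing k] [LieRing M] [LieAlgebra k M] {n : ℕ}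

/-- The image in the free solvable Lie algebra of the generator `x`. -/
noncomputable def of (k : Type*) {X : Type*} [CommRing k] (n : ℕ) (x : X) : FreeSolvableLie k X n :=
  lieQuotientMk _ (FreeLieAlgebra.of k x)

/-- The universal property of the free solvable Lie algebra. -/
noncomputable def lift (h : derivedSeries k M n = ⊥) (f : X → M) :
    FreeSolvableLie k X n →ₗ⁅k⁆ M :=
  lieQuotientLift _ (FreeLieAlgebra.lift k f) (derivedSeries_le_ker h _)

@[simp]
theorem lift_of (h : derivedSeries k M n = ⊥) (f : X → M) (x : X) : lift h f (of k n x) = f x :=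
  FreeLieAlgebra.lift_of_apply f x

theorem hom_ext {f g : FreeSolvableLie k X n →ₗ⁅k⁆ M} (h : ∀ x, f (of k n x) = g (of k n x)) :
    f = g := by
  ext u
  obtain ⟨w, rfl⟩ := lieQuotientMk_surjective _ u
  exact LieHom.congr_fun (FreeLieAlgebra.hom_ext
    (F₁ := f.comp (lieQuotientMk _)) (F₂ := g.comp (lieQuotientMk _)) h) w

theorem mem_lieSubalgebra {K : LieSubalgebra k (FreeSolvableLie k X n)}
    (hK : ∀ x, of k n x ∈ K) (u : FreeSolvableLie k X n) : u ∈ K := by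
  obtain ⟨w, rfl⟩ := lieQuotientMk_surjective _ u
  let toK : FreeLieAlgebra k X →ₗ⁅k⁆ K := FreeLieAlgebra.lift k fun x => ⟨of k n x, hK x⟩
  have incl_comp_toK : K.incl.comp toK = lieQuotientMk _ :=
    FreeLieAlgebra.hom_ext fun x => congrArg K.incl (FreeLieAlgebra.lift_of_apply _ x)
  rw [← incl_comp_toK]
  exact (toK w).property

theorem map_mem_of_lie_mem {V : Type*} [AddCommGroup V] [Module k V] {S : Submodule k V}
    {f : FreeSolvableLie k X n →ₗ[k] V} (hof : ∀ x, f (of k n x) ∈ S)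
    (hlie : ∀ u v : FreeSolvableLie k X n, f ⁅u, v⁆ ∈ S) (u : FreeSolvableLie k X n) : f u ∈ S :=
  mem_lieSubalgebra (K := { S.comap f with lie_mem' := fun _ _ => hlie _ _ }) hof u

theorem map_mem_smul_top_of_forall_of {A : Type*} [CommRing A] [Algebra k A] [LieAlgebra A M]
    [IsScalarTower k A M] {I : Ideal A} {f : FreeSolvableLie k X n →ₗ⁅k⁆ M}
    (hof : ∀ x, f (of k n x) ∈ I • (⊤ : Submodule A M)) (u : FreeSolvableLie k X n) :
    f u ∈ I • (⊤ : Submodule A M) := by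
  let S := (I • (⊤ : Submodule A M)).restrictScalars k
  refine mem_lieSubalgebra (K := { S.comap (f : FreeSolvableLie k X n →ₗ[k] M) with
    lie_mem' := fun {u v} hu hv => ?_ }) hof u
  change f ⁅u, v⁆ ∈ I • (⊤ : Submodule A M)
  rw [LieHom.map_lie]
  exact Submodule.smul_mono_left Ideal.mul_le_right (lie_mem_ideal_mul_smul_top hu hv)

variable (k X n)

/-- The homomorphism multiplying the component of degree `d` by `X ^ d`, which encodes the grading
of the free solvable Lie algebra by degree. -/
noncomputable def scale : FreeSolvableLie k X n →ₗ⁅k⁆ k[X] ⊗[k] FreeSolvableLie k X n :=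
  lift (derivedSeries_tensorProduct_eq_bot k[X] (derivedSeries_quotient_derivedSeries n))
    fun x => (Polynomial.X : k[X]) ⊗ₜ of k n x

theorem scale_injective : Function.Injective (scale k X n) := by
  let incl : FreeSolvableLie k X n →ₗ⁅k⁆ k ⊗[k] FreeSolvableLie k X n :=
    { TensorProduct.mk k k _ 1 with map_lie' := by simp }
  have eval_one_scale :
      (ExtendScalars.map (aeval (1 : k)) LieHom.id).comp (scale k X n) = incl :=
    hom_ext fun x => by
      change ExtendScalars.map _ _ (scale k X n (of k n x)) = (1 : k) ⊗ₜ[k] of k n x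
      simp [scale]
  have incl_injective : Function.Injective incl := (TensorProduct.lid k _).symm.injective
  rw [← eval_one_scale, LieHom.coe_comp] at incl_injective
  exact incl_injective.of_comp

theorem scale_mem_span_X_smul_top (u : FreeSolvableLie k X n) :
    scale k X n u ∈ Ideal.span {(Polynomial.X : k[X])} •
      (⊤ : Submodule k[X] (k[X] ⊗[k] FreeSolvableLie k X n)) := by
  refine map_mem_smul_top_of_forall_of (fun x => ?_) u
  have scale_of : scale k X n (of k n x) =
      (Polynomial.X : k[X]) • ((1 : k[X]) ⊗ₜ[k] of k n x) := by
    simp [scale, TensorProduct.smul_tmul']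
  rw [scale_of]
  exact Submodule.smul_mem_smul (Ideal.mem_span_singleton_self _) Submodule.mem_top

theorem iInf_lowerCentralSeries_eq_bot :
    ⨅ i, lowerCentralSeries k (FreeSolvableLie k X n) (FreeSolvableLie k X n) i = ⊥ :=
  have := isHausdorff_span_X_tensorProduct k (FreeSolvableLie k X n)
  iInf_lowerCentralSeries_eq_bot_of_injective (scale_injective k X n)
    (scale_mem_span_X_smul_top k X n)

variable {k X n}

theorem injective_of_map_of_sub_of_mem_derivedSeries_one
    {θ : FreeSolvableLie k X n →ₗ⁅k⁆ FreeSolvableLie k X n}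
    (hθ : ∀ x, θ (of k n x) - of k n x ∈ derivedSeries k (FreeSolvableLie k X n) 1) :
    Function.Injective θ :=
  injective_of_map_sub_self_mem_derivedSeries_one (iInf_lowerCentralSeries_eq_bot k X n) <|
    map_mem_of_lie_mem (f := (θ : FreeSolvableLie k X n →ₗ[k] _) - LinearMap.id)
      (S := (derivedSeries k (FreeSolvableLie k X n) 1).toSubmodule) hθ fun u v => by
        simpa using sub_mem (lie_mem_derivedSeries_one (R := k) (θ u) (θ v))
          (lie_mem_derivedSeries_one u v)

end FreeSolvableLie

theorem injective_of_linearIndependent_mod_derived_general {k X B : Type*} [CommRing k] {n : ℕ}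
    (b : B → FreeSolvableLie k X n)
    (g : FreeSolvableLie k X n ⧸ derivedSeries k (FreeSolvableLie k X n) 1 →ₗ[k] B →₀ k)
    (hg : ∀ β, g (LieSubmodule.Quotient.mk' _ (b β)) = Finsupp.single β 1)
    (φ : FreeSolvableLie k B n →ₗ⁅k⁆ FreeSolvableLie k X n)
    (hφ : ∀ β, φ (FreeSolvableLie.of k n β) = b β) :
    Function.Injective φ := by
  let c : FreeSolvableLie k X n →ₗ[k] FreeSolvableLie k B n :=
    Finsupp.linearCombination k (FreeSolvableLie.of k n) ∘ₗ g ∘ₗ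
      (LieSubmodule.Quotient.mk' (derivedSeries k (FreeSolvableLie k X n) 1)).toLinearMap
  have c_apply (u) : c u = Finsupp.linearCombination k (FreeSolvableLie.of k n)
      (g (LieSubmodule.Quotient.mk' _ u)) := rfl
  have c_lie (u v : FreeSolvableLie k X n) : c ⁅u, v⁆ = 0 := by
    have mk_lie :
        LieSubmodule.Quotient.mk' (derivedSeries k (FreeSolvableLie k X n) 1) ⁅u, v⁆ = 0 :=
      (LieSubmodule.Quotient.mk_eq_zero _).mpr (lie_mem_derivedSeries_one u v)
    rw [c_apply, mk_lie, map_zero, map_zero]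
  have c_b (β) : c (b β) = FreeSolvableLie.of k n β := by
    rw [c_apply, hg, Finsupp.linearCombination_single, one_smul]
  let ρ : FreeSolvableLie k X n →ₗ⁅k⁆ FreeSolvableLie k B n :=
    FreeSolvableLie.lift (derivedSeries_quotient_derivedSeries n) fun x => c (.of k n x)
  have ρ_sub_c (u) : ρ u - c u ∈ derivedSeries k (FreeSolvableLie k B n) 1 :=
    FreeSolvableLie.map_mem_of_lie_mem (f := (ρ : FreeSolvableLie k X n →ₗ[k] _) - c)
      (S := (derivedSeries k (FreeSolvableLie k B n) 1).toSubmodule)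
      (fun x => by simp [ρ]) (fun u v => by
        simpa [c_lie] using lie_mem_derivedSeries_one (R := k) (ρ u) (ρ v)) u
  have ρφ_injective : Function.Injective (ρ.comp φ) :=
    FreeSolvableLie.injective_of_map_of_sub_of_mem_derivedSeries_one fun β => by
      simpa [hφ, c_b] using ρ_sub_c (b β)
  exact Function.Injective.of_comp ρφ_injective

/-- A family of elements of a free metabelian Lie algebra whose images modulo the derived
ideal are linearly independent generates a free metabelian subalgebra: the Lie algebra
homomorphism from the free metabelian Lie algebra on the index type determined by the
family is injective. -/
theorem injective_of_linearIndependent_mod_derived {k X B : Type*} [Field k]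
    (b : B → FreeMetabelianLie k X)
    (hli : LinearIndependent k fun β : B =>
      LieSubmodule.Quotient.mk'
        (LieAlgebra.derivedSeries k (FreeMetabelianLie k X) 1) (b β))
    (φ : FreeMetabelianLie k B →ₗ⁅k⁆ FreeMetabelianLie k X)
    (hφ : ∀ β : B, φ (fmGen k β) = b β) :
    Function.Injective φ := by
  obtain ⟨g, hg⟩ := LinearMap.exists_leftInverse_of_injective _ (LinearMap.ker_eq_bot.mpr hli)
  refine injective_of_linearIndependent_mod_derived_general b g (fun β => ?_) φ hφ
  simpa using LinearMap.congr_fun hg (Finsupp.single β 1)
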